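/- arXiv:0809.1584 — 2 statements merged into one kernel-verified Lean document; each statement's English description precedes it below -/
import Mathlib

section
/- Let N ≥ 2 and let X and ω be N×N traceless skew-Hermitian complex matrices. Let A₁ ≥ A₂ ≥ ⋯ ≥ A_N be the eigenvalues (with multiplicity) of the Hermitian matrix −iX and let M₁ ≥ ⋯ ≥ M_N be those of −iω. Let λ₁ > ⋯ > λ_r be the distinct eigenvalues of −iω, let V_k ⊆ ℂ^N be the sum of the eigenspaces of −iω for λ₁,…,λ_k, and let d_k = dim V_k. Then −Tr(ωX) ≤ Σ_{j=1}^N A_j·M_j, and equality holds if and only if X commutes with ω (in which case X preserves each V_k) and for every k = 1,…,r the trace of the restriction of −iX to V_k equals A₁ + ⋯ + A_{d_k}. -/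
open Matrix BigOperators

/-!
Write `b` for a number below the spectrum of `W = -iω`, and `E μ` for the spectral projection of
`W` onto `[μ, ∞)`. The layer-cake decomposition `W = b + ∑ μ, w μ • E μ`, over the eigenvalues `μ`
of `W` and with all `w μ > 0`, reduces the claim for `H = -iX` to Ky Fan's principle: a projection
`P` of rank `d` satisfies `tr (P H) ≤ A₁ + ⋯ + A_d`. For a threshold `c` separating `A_d` from
`A_{d+1}` the defect in this bound is `tr ((1 - P) (H - c)⁺) + tr (P (H - c)⁻)`, a sum of traces of
products of positive semidefinite matrices. Such a trace is nonnegative and vanishes only if the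
product does, so equality forces `P` to commute with `H`.
-/

theorem exists_pos_weights {G : Type*} [AddCommGroup G] [LinearOrder G] [IsOrderedAddMonoid G]
    (s : Finset G) (b : G) (hb : ∀ x ∈ s, b < x) :
    ∃ w : G → G, (∀ μ ∈ s, 0 < w μ) ∧ ∀ x ∈ s, b + ∑ μ ∈ s with μ ≤ x, w μ = x := by
  induction s using Finset.induction_on_min generalizing b with
  | empty => exact ⟨0, by simp⟩
  | insert a s has ih =>
    obtain ⟨w, hw_pos, hw_sum⟩ := ih a has
    have ha : a ∉ s := fun h => (has a h).false
    have hw_congr (x : G) :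
        ∑ μ ∈ s with μ ≤ x, Function.update w a (a - b) μ = ∑ μ ∈ s with μ ≤ x, w μ :=
      Finset.sum_congr rfl fun μ hμ =>
        Function.update_of_ne (ne_of_mem_of_not_mem (Finset.mem_of_mem_filter μ hμ) ha) _ _
    refine ⟨Function.update w a (a - b), fun μ hμ => ?_, fun x hx => ?_⟩
    · rcases Finset.mem_insert.1 hμ with rfl | hμ
      · simpa using hb μ (by simp)
      · rw [Function.update_of_ne (ne_of_mem_of_not_mem hμ ha)]
        exact hw_pos μ hμ
    · have hax : a ≤ x := (Finset.mem_insert.1 hx).elim (fun h => h.ge) (fun h => (has x h).le)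
      rw [Finset.filter_insert, if_pos hax, Finset.sum_insert (by simp [ha]), hw_congr,
        Function.update_self, ← add_assoc, add_sub_cancel]
      rcases Finset.mem_insert.1 hx with rfl | hx
      · rw [Finset.filter_false_of_mem fun μ hμ => (has μ hμ).not_ge, Finset.sum_empty, add_zero]
      · exact hw_sum x hx

theorem exists_threshold {R : Type*} [CommRing R] [LinearOrder R] [IsOrderedAddMonoid R]
    {N : ℕ} {A : Fin N → R} (hA : Antitone A) {d : ℕ} (hd : d ≤ N) :
    ∃ c, ∑ j : Fin N with j.val < d, A j = c * d + ∑ j, (A j - c)⁺ := by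
  obtain ⟨c, hc_le, hle_c⟩ :
      ∃ c, (∀ j : Fin N, (j : ℕ) < d → c ≤ A j) ∧ ∀ j : Fin N, d ≤ (j : ℕ) → A j ≤ c := by
    rcases hd.lt_or_eq with hdN | rfl
    · exact ⟨A ⟨d, hdN⟩, fun j hj => hA hj.le, fun j hj => hA hj⟩
    · obtain ⟨c, hc⟩ := (Set.finite_range A).bddBelow
      exact ⟨c, fun j _ => hc ⟨j, rfl⟩, fun j hj => absurd j.2 hj.not_gt⟩
  have hpos (j : Fin N) : (A j - c)⁺ = if (j : ℕ) < d then A j - c else 0 := by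
    split_ifs with hj
    · exact posPart_of_nonneg (sub_nonneg.2 (hc_le j hj))
    · exact posPart_of_nonpos (sub_nonpos.2 (hle_c j (not_lt.1 hj)))
  refine ⟨c, ?_⟩
  simp_rw [hpos, ← Finset.sum_filter, Finset.sum_sub_distrib, Finset.sum_const,
    Fin.card_filter_val_lt, min_eq_right hd]
  simp only [nsmul_eq_mul]
  ring

theorem trace_restrict_of_isProj {K E : Type*} [Field K] [AddCommGroup E] [Module K E]
    [FiniteDimensional K E] {p : Submodule K E} {π f : E →ₗ[K] E} (hπ : LinearMap.IsProj p π)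
    (hf : ∀ v ∈ p, f v ∈ p) :
    LinearMap.trace K p (f.restrict hf) = LinearMap.trace K E (π ∘ₗ f) := by
  have hrestrict : f.restrict hf = hπ.codRestrict ∘ₗ f ∘ₗ p.subtype := by
    ext v
    simpa using (hπ.map_id _ (hf v v.2)).symm
  rw [hrestrict, LinearMap.trace_comp_comm', LinearMap.comp_assoc, hπ.subtype_comp_codRestrict,
    LinearMap.trace_comp_comm']

theorem mem_of_isProj_of_commute {K E : Type*} [Semiring K] [AddCommMonoid E] [Module K E]
    {p : Submodule K E} {π f : E →ₗ[K] E} (hπ : LinearMap.IsProj p π)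
    (hcomm : Commute π f) {v : E} (hv : v ∈ p) : f v ∈ p := by
  rw [← hπ.map_id v hv, ← Module.End.mul_apply, ← hcomm.eq]
  exact hπ.map_mem _

theorem trace_eq_rank_of_isIdempotentElem {K n : Type*} [Field K] [Fintype n]
    {P : Matrix n n K} (hP : IsIdempotentElem P) : P.trace = P.rank := by
  classical
  have hidem : IsIdempotentElem P.toLin' := hP.map (toLinAlgEquiv' (R := K) (n := n))
  rw [← trace_toLin'_eq, (LinearMap.IsIdempotentElem.isProj_range _ hidem).trace]
  rfl

section
open scoped ComplexOrder MatrixOrder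
variable {n 𝕜 : Type*} [RCLike 𝕜] [Fintype n] {A B : Matrix n n 𝕜}

theorem trace_mul_nonneg_of_posSemidef (hA : A.PosSemidef) (hB : B.PosSemidef) :
    0 ≤ (A * B).trace := by
  classical
  obtain ⟨C, rfl⟩ := CStarAlgebra.nonneg_iff_eq_star_mul_self.1 hA.nonneg
  rw [mul_assoc, trace_mul_comm, star_eq_conjTranspose]
  exact (hB.mul_mul_conjTranspose_same C).trace_nonneg

theorem trace_mul_eq_zero_iff_of_posSemidef (hA : A.PosSemidef) (hB : B.PosSemidef) :
    (A * B).trace = 0 ↔ A * B = 0 := by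
  classical
  refine ⟨fun h => ?_, fun h => by rw [h, trace_zero]⟩
  obtain ⟨C, rfl⟩ := CStarAlgebra.nonneg_iff_eq_star_mul_self.1 hA.nonneg
  obtain ⟨D, rfl⟩ := CStarAlgebra.nonneg_iff_eq_star_mul_self.1 hB.nonneg
  have hCD : C * star D = 0 := by
    rw [← trace_mul_conjTranspose_self_eq_zero_iff, ← h, mul_assoc, mul_assoc,
      trace_mul_comm (star C)]
    simp only [star_eq_conjTranspose, conjTranspose_mul, conjTranspose_conjTranspose, mul_assoc]
  calc star C * C * (star D * D) = star C * (C * star D) * D := by simp only [mul_assoc]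
    _ = 0 := by rw [hCD, mul_zero, zero_mul]

end

section
variable {n 𝕜 : Type*} [RCLike 𝕜] [Fintype n] [DecidableEq n] {A H : Matrix n n 𝕜}

theorem continuousOn_spectrum (A : Matrix n n 𝕜) (f : ℝ → ℝ) : ContinuousOn f (spectrum ℝ A) :=
  A.finite_real_spectrum.continuousOn f

theorem trace_cfc (hA : A.IsHermitian) (f : ℝ → ℝ) :
    (cfc f A).trace = ∑ i, (f (hA.eigenvalues i) : 𝕜) := by
  rw [hA.cfc_eq, IsHermitian.cfc, Unitary.conjStarAlgAut_apply, trace_mul_cycle,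
    Unitary.coe_star_mul_self, one_mul, trace_diagonal]
  rfl

theorem cfc_mulVec_of_eigenvector (hA : A.IsHermitian) (f : ℝ → ℝ) {μ : ℝ} {v : n → 𝕜}
    (hv : A *ᵥ v = (μ : 𝕜) • v) : cfc f A *ᵥ v = (f μ : 𝕜) • v := by
  have hA' : IsSelfAdjoint A := hA
  have hf := continuousOn_spectrum A
  let g : ℝ → ℝ := fun x => (f x - f μ) / (x - μ)
  have hfg : f = fun x => g x * (x - μ) + f μ := by
    ext x
    rcases eq_or_ne x μ with rfl | hx
    · simp
    · simp [g, div_mul_cancel₀ _ (sub_ne_zero.2 hx)]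
  have hcfc : cfc f A = cfc g A * (A - algebraMap ℝ _ μ) + algebraMap ℝ _ (f μ) := by
    conv_lhs => rw [hfg]
    rw [cfc_add_const (f μ) (fun x => g x * (x - μ)) A (hf _) hA',
      cfc_mul g (fun x => x - μ) A (hf _) (hf _),
      cfc_sub (fun x => x) (fun _ => μ) A (hf _) (hf _), cfc_id' ℝ A hA', cfc_const μ A hA']
  have hsmul (c : ℝ) : algebraMap ℝ (Matrix n n 𝕜) c *ᵥ v = (c : 𝕜) • v := by
    rw [Algebra.algebraMap_eq_smul_one, smul_mulVec, one_mulVec,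
      RCLike.real_smul_eq_coe_smul (K := 𝕜)]
  rw [hcfc, add_mulVec, ← mulVec_mulVec, sub_mulVec, hv, hsmul, hsmul, sub_self, mulVec_zero,
    zero_add]

theorem eq_algebraMap_add_cfc_posPart_sub_cfc_negPart (hH : H.IsHermitian) (c : ℝ) :
    H = algebraMap ℝ _ c + (cfc (fun x => (x - c)⁺) H - cfc (fun x => (x - c)⁻) H) := by
  have hH' : IsSelfAdjoint H := hH
  have hf := continuousOn_spectrum H
  rw [← cfc_sub _ _ H (hf _) (hf _)]
  simp_rw [posPart_sub_negPart]
  rw [← cfc_const_add c (fun x => x - c) H (hf _) hH']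
  simp_rw [add_sub_cancel]
  rw [cfc_id' ℝ H hH']

theorem exists_trace_mul_add_eq_sum_eigenvalues (hH : H.IsHermitian) {N : ℕ} (σ : Fin N ≃ n)
    (hσ : Antitone (hH.eigenvalues ∘ σ)) {P : Matrix n n 𝕜} (hP : IsIdempotentElem P) :
    ∃ c : ℝ, (P * H).trace + (((1 - P) * cfc (fun x => (x - c)⁺) H).trace +
        (P * cfc (fun x => (x - c)⁻) H).trace) =
      ((∑ j : Fin N with j.val < P.rank, hH.eigenvalues (σ j) : ℝ) : 𝕜) := by
  have hrank : P.rank ≤ N := by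
    simpa [← Fintype.card_congr σ] using P.rank_le_card_width
  obtain ⟨c, hc⟩ := exists_threshold hσ hrank
  have htrace : (cfc (fun x => (x - c)⁺) H).trace =
      ((∑ j, (hH.eigenvalues (σ j) - c)⁺ : ℝ) : 𝕜) := by
    rw [trace_cfc hH, ← σ.sum_comp, RCLike.ofReal_sum]
  have hconst : (P * algebraMap ℝ _ c).trace = c * P.trace := by
    rw [Algebra.algebraMap_eq_smul_one, mul_smul_comm, mul_one, trace_smul,
      RCLike.real_smul_eq_coe_mul]
  simp only [Function.comp_apply] at hc
  refine ⟨c, ?_⟩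
  conv_lhs => enter [1]; rw [eq_algebraMap_add_cfc_posPart_sub_cfc_negPart hH c]
  rw [hc, RCLike.ofReal_add, ← htrace, RCLike.ofReal_mul, RCLike.ofReal_natCast,
    ← trace_eq_rank_of_isIdempotentElem hP]
  simp only [mul_add, mul_sub, sub_mul, one_mul, trace_add, trace_sub, hconst]
  ring

section
open scoped ComplexOrder MatrixOrder

theorem posSemidef_cfc {f : ℝ → ℝ} (hf : ∀ x, 0 ≤ f x) (A : Matrix n n 𝕜) :
    (cfc f A).PosSemidef :=
  nonneg_iff_posSemidef.1 (cfc_nonneg fun x _ => hf x)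

theorem trace_mul_le_sum_eigenvalues (hH : H.IsHermitian) {N : ℕ} (σ : Fin N ≃ n)
    (hσ : Antitone (hH.eigenvalues ∘ σ)) {P : Matrix n n 𝕜} (hP : IsStarProjection P) :
    (P * H).trace ≤ ((∑ j : Fin N with j.val < P.rank, hH.eigenvalues (σ j) : ℝ) : 𝕜) := by
  obtain ⟨c, hc⟩ := exists_trace_mul_add_eq_sum_eigenvalues hH σ hσ hP.isIdempotentElem
  rw [← hc]
  exact le_add_of_nonneg_right <| add_nonneg
    (trace_mul_nonneg_of_posSemidef hP.one_sub_nonneg.posSemidef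
      (posSemidef_cfc (fun _ => posPart_nonneg _) H))
    (trace_mul_nonneg_of_posSemidef hP.nonneg.posSemidef
      (posSemidef_cfc (fun _ => negPart_nonneg _) H))

theorem commute_of_trace_mul_eq_sum_eigenvalues (hH : H.IsHermitian) {N : ℕ} (σ : Fin N ≃ n)
    (hσ : Antitone (hH.eigenvalues ∘ σ)) {P : Matrix n n 𝕜} (hP : IsStarProjection P)
    (heq : (P * H).trace =
      ((∑ j : Fin N with j.val < P.rank, hH.eigenvalues (σ j) : ℝ) : 𝕜)) :
    Commute P H := by
  obtain ⟨c, hc⟩ := exists_trace_mul_add_eq_sum_eigenvalues hH σ hσ hP.isIdempotentElem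
  have hP₀ := hP.nonneg.posSemidef
  have hQ₀ := hP.one_sub_nonneg.posSemidef
  have hpos := posSemidef_cfc (fun x => posPart_nonneg (x - c)) H
  have hneg := posSemidef_cfc (fun x => negPart_nonneg (x - c)) H
  rw [← heq, add_eq_left, add_eq_zero_iff_of_nonneg (trace_mul_nonneg_of_posSemidef hQ₀ hpos)
    (trace_mul_nonneg_of_posSemidef hP₀ hneg), trace_mul_eq_zero_iff_of_posSemidef hQ₀ hpos,
    trace_mul_eq_zero_iff_of_posSemidef hP₀ hneg] at hc
  have hcomm_of_mul_eq_zero {Q F : Matrix n n 𝕜} (hQ : IsSelfAdjoint Q) (hF : IsSelfAdjoint F)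
      (hQF : Q * F = 0) : Commute Q F :=
    (IsSelfAdjoint.commute_iff hQ hF).2 (hQF ▸ .zero _)
  have hcomm_pos : Commute P (cfc (fun x => (x - c)⁺) H) := by
    simpa using (Commute.one_left _).sub_left
      (hcomm_of_mul_eq_zero hQ₀.isHermitian hpos.isHermitian hc.1)
  rw [eq_algebraMap_add_cfc_posPart_sub_cfc_negPart hH c]
  exact (Algebra.commute_algebraMap_right c P).add_right <| hcomm_pos.sub_right <|
    hcomm_of_mul_eq_zero hP₀.isHermitian hneg.isHermitian hc.2

end

/-- The spectral projection of the Hermitian matrix `A` onto `[c, ∞)`, defined through the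
continuous functional calculus: every function is continuous on the finite spectrum of `A`. Its
value is `0` when `A` is not Hermitian. -/
noncomputable def upperSpectralProjection (A : Matrix n n 𝕜) (c : ℝ) : Matrix n n 𝕜 :=
  cfc ((Set.Ici c).indicator 1) A

/-- The sum of the eigenspaces of `A` for the real eigenvalues `μ ≥ c`. -/
def upperEigenspace (A : Matrix n n 𝕜) (c : ℝ) : Submodule 𝕜 (n → 𝕜) :=
  ⨆ μ : ℝ, ⨆ _ : c ≤ μ, Module.End.eigenspace (toLin' A) (μ : 𝕜)

theorem isStarProjection_upperSpectralProjection (A : Matrix n n 𝕜) (c : ℝ) :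
    IsStarProjection (upperSpectralProjection A c) where
  isIdempotentElem := by
    have hf := continuousOn_spectrum A ((Set.Ici c).indicator 1)
    rw [IsIdempotentElem, upperSpectralProjection, ← cfc_mul _ _ A hf hf]
    simp only [← Set.indicator_mul, Pi.one_apply, mul_one]
    rfl
  isSelfAdjoint := cfc_predicate _ A

theorem rank_upperSpectralProjection (hA : A.IsHermitian) (c : ℝ) :
    (upperSpectralProjection A c).rank = Finset.card {i | c ≤ hA.eigenvalues i} := by
  rw [← Nat.cast_inj (R := 𝕜), ← trace_eq_rank_of_isIdempotentElem
    (isStarProjection_upperSpectralProjection A c).isIdempotentElem, upperSpectralProjection,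
    trace_cfc hA]
  simp [Set.indicator_apply, apply_ite]

theorem isProj_upperSpectralProjection (hA : A.IsHermitian) (c : ℝ) :
    LinearMap.IsProj (upperEigenspace A c) (toLin' (upperSpectralProjection A c)) where
  map_mem v := by
    let basis := hA.eigenvectorBasis.toBasis.map (WithLp.linearEquiv 2 𝕜 (n → 𝕜))
    suffices h : ⊤ ≤ (upperEigenspace A c).comap (toLin' (upperSpectralProjection A c)) from
      h Submodule.mem_top
    rw [← basis.span_eq, Submodule.span_le]
    rintro _ ⟨i, rfl⟩
    have hi : A *ᵥ basis i = (hA.eigenvalues i : 𝕜) • basis i := by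
      rw [← RCLike.real_smul_eq_coe_smul]
      simpa [basis] using hA.mulVec_eigenvectorBasis i
    rw [SetLike.mem_coe, Submodule.mem_comap, toLin'_apply, upperSpectralProjection,
      cfc_mulVec_of_eigenvector hA _ hi]
    by_cases hc : c ≤ hA.eigenvalues i
    · exact Submodule.smul_mem _ _ <| Submodule.mem_iSup_of_mem _ <|
        Submodule.mem_iSup_of_mem hc <| Module.End.mem_eigenspace_iff.2 <| by
          rwa [toLin'_apply]
    · simp [hc]
  map_id v hv := by
    suffices h : upperEigenspace A c ≤
        LinearMap.eqLocus (toLin' (upperSpectralProjection A c)) LinearMap.id from h hv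
    refine iSup₂_le fun μ hμ w hw => ?_
    have hw' : A *ᵥ w = (μ : 𝕜) • w := by simpa using Module.End.mem_eigenspace_iff.1 hw
    simp [upperSpectralProjection, cfc_mulVec_of_eigenvector hA _ hw', hμ]

theorem finrank_upperEigenspace (hA : A.IsHermitian) (c : ℝ) :
    Module.finrank 𝕜 (upperEigenspace A c) = (upperSpectralProjection A c).rank := by
  rw [← Nat.cast_inj (R := 𝕜), ← (isProj_upperSpectralProjection hA c).trace, trace_toLin'_eq,
    trace_eq_rank_of_isIdempotentElem
      (isStarProjection_upperSpectralProjection A c).isIdempotentElem]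

theorem exists_pos_weights_spectrum (A : Matrix n n 𝕜) :
    ∃ (b : ℝ) (w : ℝ → ℝ), (∀ μ ∈ spectrum ℝ A, 0 < w μ) ∧ ∀ x ∈ spectrum ℝ A,
      b + ∑ μ ∈ A.finite_real_spectrum.toFinset with μ ≤ x, w μ = x := by
  obtain ⟨b, hb⟩ := A.finite_real_spectrum.bddBelow
  obtain ⟨w, hw⟩ := exists_pos_weights A.finite_real_spectrum.toFinset (b - 1)
    fun x hx => (sub_one_lt b).trans_le (hb (by simpa using hx))
  exact ⟨b - 1, w, by simpa only [Set.Finite.mem_toFinset] using hw⟩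

theorem eq_algebraMap_add_sum_smul_upperSpectralProjection (hA : A.IsHermitian) {b : ℝ}
    {w : ℝ → ℝ} (hw : ∀ x ∈ spectrum ℝ A,
      b + ∑ μ ∈ A.finite_real_spectrum.toFinset with μ ≤ x, w μ = x) :
    A = algebraMap ℝ _ b +
      ∑ μ ∈ A.finite_real_spectrum.toFinset, w μ • upperSpectralProjection A μ := by
  have hA' : IsSelfAdjoint A := hA
  have hf := continuousOn_spectrum A
  simp only [upperSpectralProjection, ← cfc_smul _ _ A (hf _)]
  rw [← cfc_sum _ A _ fun _ _ => hf _, ← cfc_const_add b _ A (hf _) hA']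
  conv_lhs => rw [← cfc_id' ℝ A hA']
  refine cfc_congr fun x hx => (hw x hx).symm.trans ?_
  simp [Finset.sum_filter, Set.indicator_apply]

theorem hasEigenvalue_toLin'_iff_mem_spectrum_real (A : Matrix n n 𝕜) (μ : ℝ) :
    Module.End.HasEigenvalue (toLin' A) (μ : 𝕜) ↔ μ ∈ spectrum ℝ A := by
  rw [Module.End.hasEigenvalue_iff_mem_spectrum, spectrum_toLin',
    ← spectrum.algebraMap_mem_iff 𝕜 (r := μ), RCLike.algebraMap_eq_ofReal]

theorem upperEigenspace_eq_iSup_eigenspace {ι : Type*} [LinearOrder ι] {lam : ι → ℝ}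
    (hlam : StrictAnti lam) (hA : spectrum ℝ A ⊆ Set.range lam) (i : ι) :
    upperEigenspace A (lam i) =
      ⨆ j, ⨆ _ : j ≤ i, Module.End.eigenspace (toLin' A) (lam j : 𝕜) := by
  refine le_antisymm (iSup₂_le fun μ hμ => ?_) (iSup₂_le fun j hj =>
    le_iSup₂_of_le (lam j) (hlam.antitone hj) le_rfl)
  by_cases hev : Module.End.HasEigenvalue (toLin' A) (μ : 𝕜)
  · obtain ⟨j, rfl⟩ := hA ((hasEigenvalue_toLin'_iff_mem_spectrum_real A μ).1 hev)
    exact le_iSup₂_of_le j (hlam.le_iff_ge.1 hμ) le_rfl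
  · exact (not_not.1 hev).trans_le bot_le

theorem sum_val_lt_rank_upperSpectralProjection (hA : A.IsHermitian) {N : ℕ} (σ : Fin N ≃ n)
    (hσ : Antitone (hA.eigenvalues ∘ σ)) (c : ℝ) (a : Fin N → ℝ) :
    ∑ j : Fin N with j.val < (upperSpectralProjection A c).rank, a j =
      ∑ j : Fin N with c ≤ hA.eigenvalues (σ j), a j := by
  have hcard : (upperSpectralProjection A c).rank =
      Finset.card {j : Fin N | c ≤ (hA.eigenvalues ∘ σ) j} := by
    rw [rank_upperSpectralProjection hA]
    exact (Finset.card_equiv σ (by simp)).symm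
  refine Finset.sum_congr (Finset.filter_congr fun j _ => ?_) fun _ _ => rfl
  rw [hcard, Tuple.lt_card_ge_iff_apply_ge_of_antitone hσ, Function.comp_apply]

section
variable {W : Matrix n n 𝕜} (hH : H.IsHermitian) (hW : W.IsHermitian) {N : ℕ} (σ τ : Fin N ≃ n)
  (hσ : Antitone (hH.eigenvalues ∘ σ)) (hτ : Antitone (hW.eigenvalues ∘ τ))
include hτ

theorem exists_pos_weights_sum_eigenvalues_mul_sub_trace_mul :
    ∃ w : ℝ → ℝ, (∀ μ ∈ spectrum ℝ W, 0 < w μ) ∧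
      ((∑ j, hH.eigenvalues (σ j) * hW.eigenvalues (τ j) : ℝ) : 𝕜) - (W * H).trace =
        ∑ μ ∈ W.finite_real_spectrum.toFinset, (w μ : 𝕜) *
          (((∑ j : Fin N with j.val < (upperSpectralProjection W μ).rank,
            hH.eigenvalues (σ j) : ℝ) : 𝕜) - (upperSpectralProjection W μ * H).trace) := by
  obtain ⟨b, w, hw_pos, hw_sum⟩ := exists_pos_weights_spectrum W
  refine ⟨w, hw_pos, ?_⟩
  have hsum : ∑ j, hH.eigenvalues (σ j) * hW.eigenvalues (τ j) =
      b * ∑ j, hH.eigenvalues (σ j) + ∑ μ ∈ W.finite_real_spectrum.toFinset,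
        w μ * ∑ j : Fin N with μ ≤ hW.eigenvalues (τ j), hH.eigenvalues (σ j) := by
    simp only [Finset.mul_sum, Finset.sum_filter]
    rw [Finset.sum_comm, ← Finset.sum_add_distrib]
    refine Finset.sum_congr rfl fun j _ => ?_
    conv_lhs => rw [← hw_sum _ (hW.eigenvalues_mem_spectrum_real (τ j))]
    rw [mul_comm, add_mul, Finset.sum_filter, Finset.sum_mul]
    simp only [ite_mul, zero_mul, mul_ite, mul_zero]
  have htrace : (W * H).trace = (b : 𝕜) * H.trace +
      ∑ μ ∈ W.finite_real_spectrum.toFinset,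
        (w μ : 𝕜) * (upperSpectralProjection W μ * H).trace := by
    conv_lhs => rw [eq_algebraMap_add_sum_smul_upperSpectralProjection hW hw_sum]
    simp only [add_mul, Finset.sum_mul, trace_add, trace_sum, trace_smul,
      Algebra.algebraMap_eq_smul_one, smul_mul_assoc, one_mul]
  rw [hsum, htrace, hH.trace_eq_sum_eigenvalues, ← σ.sum_comp]
  simp only [sum_val_lt_rank_upperSpectralProjection hW τ hτ, mul_sub, Finset.sum_sub_distrib]
  push_cast
  ring

section
open scoped ComplexOrder
include hσ

theorem trace_mul_le_sum_eigenvalues_mul :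
    (W * H).trace ≤
      ((∑ j, hH.eigenvalues (σ j) * hW.eigenvalues (τ j) : ℝ) : 𝕜) := by
  obtain ⟨w, hw_pos, hw⟩ :=
    exists_pos_weights_sum_eigenvalues_mul_sub_trace_mul hH hW σ τ hτ
  rw [← sub_nonneg, hw]
  refine Finset.sum_nonneg fun μ hμ => mul_nonneg ?_ (sub_nonneg.2 ?_)
  · exact RCLike.ofReal_nonneg.2 (hw_pos μ (by simpa using hμ)).le
  · exact trace_mul_le_sum_eigenvalues hH σ hσ (isStarProjection_upperSpectralProjection W μ)

theorem trace_mul_eq_sum_eigenvalues_mul_iff :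
    (W * H).trace = ((∑ j, hH.eigenvalues (σ j) * hW.eigenvalues (τ j) : ℝ) : 𝕜) ↔
      ∀ μ ∈ spectrum ℝ W, (upperSpectralProjection W μ * H).trace =
        ((∑ j : Fin N with j.val < (upperSpectralProjection W μ).rank,
          hH.eigenvalues (σ j) : ℝ) : 𝕜) := by
  obtain ⟨w, hw_pos, hw⟩ :=
    exists_pos_weights_sum_eigenvalues_mul_sub_trace_mul hH hW σ τ hτ
  rw [eq_comm, ← sub_eq_zero, hw, Finset.sum_eq_zero_iff_of_nonneg]
  · simp only [Set.Finite.mem_toFinset]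
    refine forall₂_congr fun μ hμ => ?_
    rw [mul_eq_zero_iff_left (RCLike.ofReal_ne_zero.2 (hw_pos μ hμ).ne'), sub_eq_zero, eq_comm]
  · refine fun μ hμ => mul_nonneg ?_ (sub_nonneg.2 ?_)
    · exact RCLike.ofReal_nonneg.2 (hw_pos μ (by simpa using hμ)).le
    · exact trace_mul_le_sum_eigenvalues hH σ hσ (isStarProjection_upperSpectralProjection W μ)

end
end

theorem commute_of_forall_commute_upperSpectralProjection {B : Matrix n n 𝕜}
    (hA : A.IsHermitian) (h : ∀ μ ∈ spectrum ℝ A, Commute (upperSpectralProjection A μ) B) :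
    Commute A B := by
  obtain ⟨b, w, -, hw_sum⟩ := exists_pos_weights_spectrum A
  rw [eq_algebraMap_add_sum_smul_upperSpectralProjection hA hw_sum]
  exact (Algebra.commute_algebraMap_left _ B).add_left <| Finset.sum_induction _ (Commute · B)
    (fun _ _ => .add_left) (.zero_left B) fun μ hμ => (h μ (by simpa using hμ)).smul_left _

theorem exists_trace_restrict_upperEigenspace_eq_iff {W : Matrix n n 𝕜} (hH : H.IsHermitian)
    (hW : W.IsHermitian) {N : ℕ} (σ : Fin N ≃ n) (hσ : Antitone (hH.eigenvalues ∘ σ)) (μ : ℝ) :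
    (∃ h : ∀ v ∈ upperEigenspace W μ, toLin' H v ∈ upperEigenspace W μ,
      LinearMap.trace 𝕜 (upperEigenspace W μ) ((toLin' H).restrict h) =
        ((∑ j : Fin N with j.val < Module.finrank 𝕜 (upperEigenspace W μ),
          hH.eigenvalues (σ j) : ℝ) : 𝕜)) ↔
      (upperSpectralProjection W μ * H).trace =
        ((∑ j : Fin N with j.val < (upperSpectralProjection W μ).rank,
          hH.eigenvalues (σ j) : ℝ) : 𝕜) := by
  have hproj := isProj_upperSpectralProjection hW μ
  simp only [trace_restrict_of_isProj hproj, finrank_upperEigenspace hW, ← toLin'_mul,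
    trace_toLin'_eq]
  refine ⟨fun ⟨_, htrace⟩ => htrace, fun htrace => ⟨fun v hv => ?_, htrace⟩⟩
  have hcomm := commute_of_trace_mul_eq_sum_eigenvalues hH σ hσ
    (isStarProjection_upperSpectralProjection W μ) htrace
  exact mem_of_isProj_of_commute hproj (hcomm.map (toLinAlgEquiv' (R := 𝕜) (n := n))) hv

end

theorem stmt0_general {𝕜 n ι : Type*} [RCLike 𝕜] [Fintype n] [DecidableEq n] [LinearOrder ι]
    {H W : Matrix n n 𝕜} (hH : H.IsHermitian) (hW : W.IsHermitian)
    {N : ℕ} {A M : Fin N → ℝ} (hA : Antitone A) (hM : Antitone M)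
    (hAe : ∃ σ : Fin N ≃ n, A = hH.eigenvalues ∘ σ)
    (hMe : ∃ σ : Fin N ≃ n, M = hW.eigenvalues ∘ σ)
    {lam : ι → ℝ} (hlam : StrictAnti lam)
    (hspec : ∀ c : 𝕜, Module.End.HasEigenvalue (toLin' W) c ↔ ∃ i, (lam i : 𝕜) = c)
    {V : ι → Submodule 𝕜 (n → 𝕜)}
    (hV : ∀ i, V i = ⨆ j, ⨆ _ : j ≤ i, Module.End.eigenspace (toLin' W) (lam j : 𝕜))
    {d : ι → ℕ} (hd : ∀ i, d i = Module.finrank 𝕜 (V i)) :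
    RCLike.re (W * H).trace ≤ ∑ j, A j * M j ∧
    (RCLike.re (W * H).trace = ∑ j, A j * M j ↔
      H * W = W * H ∧ ∀ i, ∃ h : ∀ v ∈ V i, toLin' H v ∈ V i,
        LinearMap.trace 𝕜 (V i) ((toLin' H).restrict h) =
          ((∑ j : Fin N with j.val < d i, A j : ℝ) : 𝕜)) := by
  obtain ⟨σ, rfl⟩ := hAe
  obtain ⟨τ, rfl⟩ := hMe
  have hrange : spectrum ℝ W = Set.range lam := by
    ext c
    simp [← hasEigenvalue_toLin'_iff_mem_spectrum_real W c, hspec]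
  obtain rfl : V = fun i => upperEigenspace W (lam i) := funext fun i =>
    (hV i).trans (upperEigenspace_eq_iSup_eigenspace hlam hrange.le i).symm
  obtain rfl := funext hd
  have hle := trace_mul_le_sum_eigenvalues_mul hH hW σ τ hA hM
  have heq := trace_mul_eq_sum_eigenvalues_mul_iff hH hW σ τ hA hM
  refine ⟨by simpa using (RCLike.le_iff_re_im.1 hle).1, ?_⟩
  have hre : RCLike.re (W * H).trace = ∑ j, (hH.eigenvalues ∘ σ) j * (hW.eigenvalues ∘ τ) j ↔
      (W * H).trace = ((∑ j, hH.eigenvalues (σ j) * hW.eigenvalues (τ j) : ℝ) : 𝕜) :=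
    ⟨fun h => RCLike.ext (by simpa using h) (RCLike.le_iff_re_im.1 hle).2, fun h => by simp [h]⟩
  simp only [Function.comp_apply,
    exists_trace_restrict_upperEigenspace_eq_iff hH hW σ hA] at hre ⊢
  rw [hre, heq, hrange, Set.forall_mem_range, iff_and_self]
  refine fun h => (commute_of_forall_commute_upperSpectralProjection hW ?_).symm
  rw [hrange, Set.forall_mem_range]
  exact fun i => commute_of_trace_mul_eq_sum_eigenvalues hH σ hA
    (isStarProjection_upperSpectralProjection W (lam i)) (h i)

theorem neg_I_smul_mul_neg_I_smul {n : Type*} [Fintype n] (Y Z : Matrix n n ℂ) :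
    ((-Complex.I) • Y) * ((-Complex.I) • Z) = -(Y * Z) := by
  simp [smul_mul_smul_comm]

/-- Lemma `ineq` of the paper: for traceless skew-Hermitian `X, ω`,
`-Tr(ωX) ≤ ⟨‖ω‖, ‖X‖⟩ = ∑ Aⱼ Mⱼ`, with equality iff `X` commutes with `ω`
and the trace of `-iX` restricted to each `V_k(ω)` equals `A₁ + ⋯ + A_{d_k}`. -/
theorem stmt0 (N : ℕ) (hN : 2 ≤ N)
    (X ω : Matrix (Fin N) (Fin N) ℂ)
    (hXtr : X.trace = 0) (hωtr : ω.trace = 0)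
    (hX : ((-Complex.I) • X).IsHermitian) (hω : ((-Complex.I) • ω).IsHermitian)
    (A M : Fin N → ℝ) (hA : Antitone A) (hM : Antitone M)
    (hAe : ∃ σ : Equiv.Perm (Fin N), A = hX.eigenvalues ∘ σ)
    (hMe : ∃ σ : Equiv.Perm (Fin N), M = hω.eigenvalues ∘ σ)
    (r : ℕ) (lam : Fin r → ℝ) (hlam : StrictAnti lam)
    (hspec : ∀ c : ℂ,
      Module.End.HasEigenvalue (Matrix.toLin' ((-Complex.I) • ω)) c ↔ ∃ i, (lam i : ℂ) = c)
    (V : Fin r → Submodule ℂ (Fin N → ℂ))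
    (hV : ∀ i, V i = ⨆ j, ⨆ _ : j ≤ i,
      Module.End.eigenspace (Matrix.toLin' ((-Complex.I) • ω)) (lam j : ℂ))
    (d : Fin r → ℕ) (hd : ∀ i, d i = Module.finrank ℂ (V i)) :
    -(Matrix.trace (ω * X)).re ≤ ∑ j, A j * M j ∧
    (-(Matrix.trace (ω * X)).re = ∑ j, A j * M j ↔
      X * ω = ω * X ∧ ∀ i : Fin r,
        ∃ h : ∀ v ∈ V i, Matrix.toLin' ((-Complex.I) • X) v ∈ V i,
          LinearMap.trace ℂ (V i) ((Matrix.toLin' ((-Complex.I) • X)).restrict h) =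
            ((∑ j ∈ Finset.univ.filter (fun j : Fin N => (j : ℕ) < d i), A j : ℝ) : ℂ)) := by
  have h := stmt0_general hX hω hA hM hAe hMe hlam hspec hV hd
  rwa [neg_I_smul_mul_neg_I_smul, neg_I_smul_mul_neg_I_smul, neg_inj, trace_neg, map_neg] at h
end

section
/- Let N ≥ 1. For g in SU(N) (an N×N complex unitary matrix with determinant 1) and real numbers a ≤ b, say g ∼ [a,b] if every eigenvalue of g is of the form e^{iφ} with φ ∈ [a,b]. If g₁ ∼ [a₁,b₁] and g₂ ∼ [a₂,b₂], then g₁g₂ ∼ [a₁+a₂, b₁+b₂]. -/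
open Matrix

/-!
Rotating `u` and `v` makes both arcs symmetric, say `[-α, α]` and `[-β, β]`, and only
`α + β ≤ π` is in question. A unitary `u` then has its spectrum in the arc `[-α, α]` exactly when
`cos α ≤ ℜ u` in the C⋆-order, so it remains to get `cos (α + β) ≤ ℜ (u v)` from `cos α ≤ ℜ u` and
`cos β ≤ ℜ v`. This triangle inequality for angles is the positivity of `z⋆ z` for
`z = sin β • u⋆ + sin α • v - sin (α + β) • 1`: if both bounds are equalities, the vectors
`u⋆, 1, v` behave like unit vectors in a plane at successive angles `α, β`, and `z` vanishes.
-/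

open scoped ComplexStarModule

/-- The arc `{e^{iφ} : φ ∈ [a, b]}` of the unit circle, so that `g ∼ [a, b]` reads
`spectrum ℂ g ⊆ circularArc a b`. The angles are real numbers, not classes modulo `2π`: the arc is
empty if `b < a`, and it is the whole circle once `2π ≤ b - a`. -/
def circularArc (a b : ℝ) : Set ℂ :=
  {c | ∃ φ : ℝ, a ≤ φ ∧ φ ≤ b ∧ c = Complex.exp (φ * Complex.I)}

theorem circleExp_smul_mem_circularArc_iff {t a b : ℝ} {c : ℂ} :
    Circle.exp t • c ∈ circularArc (t + a) (t + b) ↔ c ∈ circularArc a b := by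
  rw [Circle.smul_def, smul_eq_mul, Circle.coe_exp]
  constructor
  · rintro ⟨φ, haφ, hφb, hφ⟩
    refine ⟨φ - t, by linarith, by linarith, ?_⟩
    rw [Complex.ofReal_sub, sub_mul, Complex.exp_sub, ← hφ,
      mul_div_cancel_left₀ _ (Complex.exp_ne_zero _)]
  · rintro ⟨φ, haφ, hφb, rfl⟩
    refine ⟨t + φ, by linarith, by linarith, ?_⟩
    rw [Complex.ofReal_add, add_mul, Complex.exp_add]

theorem cos_le_re_of_mem_circularArc {θ : ℝ} {c : ℂ} (hθ : θ ≤ Real.pi)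
    (hc : c ∈ circularArc (-θ) θ) : Real.cos θ ≤ c.re := by
  obtain ⟨φ, hφ₁, hφ₂, rfl⟩ := hc
  rw [Complex.exp_ofReal_mul_I_re, ← Real.cos_abs φ]
  exact Real.cos_le_cos_of_nonneg_of_le_pi (abs_nonneg φ) hθ (abs_le.2 ⟨hφ₁, hφ₂⟩)

theorem mem_circularArc_of_abs_arg_le {θ : ℝ} {c : ℂ} (hc : ‖c‖ = 1) (h : |c.arg| ≤ θ) :
    c ∈ circularArc (-θ) θ :=
  ⟨c.arg, (abs_le.1 h).1, (abs_le.1 h).2, by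
    simpa [hc] using (Complex.norm_mul_exp_arg_mul_I c).symm⟩

theorem mem_circularArc_of_cos_le_re {θ : ℝ} {c : ℂ} (hc : ‖c‖ = 1) (hθ : 0 ≤ θ)
    (h : Real.cos θ ≤ c.re) : c ∈ circularArc (-θ) θ := by
  refine mem_circularArc_of_abs_arg_le hc (le_of_not_gt fun hlt ↦ h.not_gt ?_)
  calc c.re = Real.cos |c.arg| := by rw [Real.cos_abs, ← Complex.norm_mul_cos_arg, hc, one_mul]
    _ < Real.cos θ := Real.cos_lt_cos_of_nonneg_of_le_pi hθ (Complex.abs_arg_le_pi c) hlt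

theorem spectrum_circleExp_smul_subset_circularArc_iff {A : Type*} [Ring A] [Algebra ℂ A] {u : A}
    {t a b : ℝ} :
    spectrum ℂ (Circle.exp t • u) ⊆ circularArc (t + a) (t + b) ↔
      spectrum ℂ u ⊆ circularArc a b := by
  have smul_mem_iff (c : ℂ) : Circle.exp t • c ∈ spectrum ℂ (Circle.exp t • u) ↔ c ∈ spectrum ℂ u :=
    spectrum.smul_mem_smul_iff (r := Circle.toUnits (Circle.exp t))
  rw [Set.subset_def, (MulAction.surjective (Circle.exp t)).forall]
  simp only [smul_mem_iff, circleExp_smul_mem_circularArc_iff, Set.subset_def]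

theorem le_of_spectrum_subset_circularArc {A : Type*} [NormedRing A] [NormedAlgebra ℂ A]
    [CompleteSpace A] [Nontrivial A] {u : A} {a b : ℝ} (h : spectrum ℂ u ⊆ circularArc a b) :
    a ≤ b :=
  let ⟨_, hc⟩ := spectrum.nonempty u
  let ⟨_, haφ, hφb, _⟩ := h hc
  haφ.trans hφb

section StarAlgebra

variable {A : Type*} [Ring A] [StarRing A] [Algebra ℂ A] [StarModule ℂ A] {u v : A}

theorem circle_smul_mem_unitary_iff (z : Circle) : z • u ∈ unitary A ↔ u ∈ unitary A := by
  have conj_mul_self : star (z : ℂ) * z = 1 := by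
    rw [Complex.star_def, Complex.conj_mul', Circle.norm_coe, Complex.ofReal_one, one_pow]
  rw [Circle.smul_def, Unitary.mem_iff, Unitary.mem_iff, star_smul, smul_mul_smul_comm,
    smul_mul_smul_comm, mul_comm (z : ℂ), conj_mul_self, one_smul, one_smul]

theorem star_mul_self_smul_add_smul_sub_smul_of_mem_unitary (hu : u ∈ unitary A)
    (hv : v ∈ unitary A) (x y z : ℝ) :
    star (x • star u + y • v - z • (1 : A)) * (x • star u + y • v - z • (1 : A)) =
      (x ^ 2 + y ^ 2 + z ^ 2) • (1 : A) + (2 * x * y) • (ℜ (u * v) : A)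
        - (2 * x * z) • (ℜ u : A) - (2 * y * z) • (ℜ v : A) := by
  simp only [star_sub, star_add, star_smul, star_star, star_one, star_trivial, realPart_apply_coe,
    star_mul, sub_mul, add_mul, mul_sub, mul_add, smul_mul_smul_comm, mul_one, one_mul,
    Unitary.mul_star_self_of_mem hu, Unitary.star_mul_self_of_mem hv]
  module

theorem star_sub_one_mul_self_of_mem_unitary (hu : u ∈ unitary A) :
    star (u - 1) * (u - 1) = (2 : ℝ) • (1 - (ℜ u : A)) := by
  simp only [star_sub, star_one, sub_mul, mul_sub, mul_one, one_mul, realPart_apply_coe,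
    Unitary.star_mul_self_of_mem hu]
  module

variable [PartialOrder A] [StarOrderedRing A]

theorem cos_add_smul_one_le_realPart_mul_of_pos (hu : u ∈ unitary A) (hv : v ∈ unitary A) {α β : ℝ}
    (hα : 0 < α) (hβ : 0 < β) (hαβ : α + β ≤ Real.pi) (h₁ : Real.cos α • (1 : A) ≤ ℜ u)
    (h₂ : Real.cos β • (1 : A) ≤ ℜ v) : Real.cos (α + β) • (1 : A) ≤ ℜ (u * v) := by
  have hsα : 0 < Real.sin α := Real.sin_pos_of_pos_of_lt_pi hα (by linarith)
  have hsβ : 0 < Real.sin β := Real.sin_pos_of_pos_of_lt_pi hβ (by linarith)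
  have hs : 0 ≤ Real.sin (α + β) := Real.sin_nonneg_of_nonneg_of_le_pi (by linarith) hαβ
  set z : A := Real.sin β • star u + Real.sin α • v - Real.sin (α + β) • (1 : A)
  have gap_eq : (2 * Real.sin β * Real.sin α) • ((ℜ (u * v) : A) - Real.cos (α + β) • (1 : A)) =
      star z * z + (2 * Real.sin β * Real.sin (α + β)) • ((ℜ u : A) - Real.cos α • (1 : A))
        + (2 * Real.sin α * Real.sin (α + β)) • ((ℜ v : A) - Real.cos β • (1 : A)) := by
    rw [star_mul_self_smul_add_smul_sub_smul_of_mem_unitary hu hv]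
    match_scalars
    · ring
    · rw [Real.sin_add, Real.cos_add]
      linear_combination Real.sin β ^ 2 * Real.sin_sq_add_cos_sq α
        + Real.sin α ^ 2 * Real.sin_sq_add_cos_sq β
    · ring
    · ring
  rw [← sub_nonneg] at h₁ h₂ ⊢
  have hpos : 0 < 2 * Real.sin β * Real.sin α := by positivity
  rw [← smul_nonneg_iff_nonneg_of_pos_left hpos, gap_eq]
  exact add_nonneg (add_nonneg (star_mul_self_nonneg z) (smul_nonneg (by positivity) h₁))
    (smul_nonneg (by positivity) h₂)

end StarAlgebra

section CStarAlgebra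

variable {A : Type*} [CStarAlgebra A] {u v : A}

section Order

variable [PartialOrder A] [StarOrderedRing A]

theorem smul_one_le_realPart_iff [IsStarNormal u] {r : ℝ} :
    r • (1 : A) ≤ ℜ u ↔ ∀ c ∈ spectrum ℂ u, r ≤ c.re := by
  rw [← Algebra.algebraMap_eq_smul_one, algebraMap_le_iff_le_spectrum (ha := (ℜ u).2),
    spectrum_realPart' u, Set.forall_mem_image]

theorem eq_one_of_one_le_realPart (hu : u ∈ unitary A) (h : 1 ≤ (ℜ u : A)) : u = 1 := by
  have hle : star (u - 1) * (u - 1) ≤ 0 := by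
    rw [star_sub_one_mul_self_of_mem_unitary hu]
    exact smul_nonpos_of_nonneg_of_nonpos zero_le_two (sub_nonpos.2 h)
  exact sub_eq_zero.1 <| (CStarRing.star_mul_self_eq_zero_iff _).1 <|
    hle.antisymm (star_mul_self_nonneg _)

theorem cos_add_smul_one_le_realPart_mul (hu : u ∈ unitary A) (hv : v ∈ unitary A) {α β : ℝ}
    (hα : 0 ≤ α) (hβ : 0 ≤ β) (hαβ : α + β ≤ Real.pi) (h₁ : Real.cos α • (1 : A) ≤ ℜ u)
    (h₂ : Real.cos β • (1 : A) ≤ ℜ v) : Real.cos (α + β) • (1 : A) ≤ ℜ (u * v) := by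
  obtain rfl | hα := hα.eq_or_lt
  · obtain rfl : u = 1 := eq_one_of_one_le_realPart hu (by simpa using h₁)
    simpa using h₂
  obtain rfl | hβ := hβ.eq_or_lt
  · obtain rfl : v = 1 := eq_one_of_one_le_realPart hv (by simpa using h₂)
    simpa using h₁
  exact cos_add_smul_one_le_realPart_mul_of_pos hu hv hα hβ hαβ h₁ h₂

end Order

theorem spectrum_mul_subset_circularArc_neg_self (hu : u ∈ unitary A) (hv : v ∈ unitary A) {α β : ℝ}
    (hα : 0 ≤ α) (hβ : 0 ≤ β) (h₁ : spectrum ℂ u ⊆ circularArc (-α) α)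
    (h₂ : spectrum ℂ v ⊆ circularArc (-β) β) :
    spectrum ℂ (u * v) ⊆ circularArc (-(α + β)) (α + β) := by
  intro c hc
  have huv : u * v ∈ unitary A := mul_mem hu hv
  have hnorm : ‖c‖ = 1 := by simpa using spectrum.subset_circle_of_unitary huv hc
  obtain hπ | hπ := le_total Real.pi (α + β)
  · exact mem_circularArc_of_abs_arg_le hnorm ((Complex.abs_arg_le_pi c).trans hπ)
  let _ := CStarAlgebra.spectralOrder A
  have _ := CStarAlgebra.spectralOrderedRing A
  have := isStarNormal_of_mem_unitary hu
  have := isStarNormal_of_mem_unitary hv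
  have := isStarNormal_of_mem_unitary huv
  have hu_re : Real.cos α • (1 : A) ≤ ℜ u :=
    smul_one_le_realPart_iff.2 fun _ hc ↦ cos_le_re_of_mem_circularArc (by linarith) (h₁ hc)
  have hv_re : Real.cos β • (1 : A) ≤ ℜ v :=
    smul_one_le_realPart_iff.2 fun _ hc ↦ cos_le_re_of_mem_circularArc (by linarith) (h₂ hc)
  have huv_re : Real.cos (α + β) • (1 : A) ≤ ℜ (u * v) :=
    cos_add_smul_one_le_realPart_mul hu hv hα hβ hπ hu_re hv_re
  exact mem_circularArc_of_cos_le_re hnorm (add_nonneg hα hβ)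
    (smul_one_le_realPart_iff.1 huv_re c hc)

theorem stmt2_general (hu : u ∈ unitary A) (hv : v ∈ unitary A) {a₁ b₁ a₂ b₂ : ℝ}
    (h₁ : spectrum ℂ u ⊆ circularArc a₁ b₁) (h₂ : spectrum ℂ v ⊆ circularArc a₂ b₂) :
    spectrum ℂ (u * v) ⊆ circularArc (a₁ + a₂) (b₁ + b₂) := by
  nontriviality A
  have exists_center_radius {a b : ℝ} (hab : a ≤ b) : ∃ m r : ℝ, 0 ≤ r ∧ m + -r = a ∧ m + r = b :=
    ⟨(a + b) / 2, (b - a) / 2, by linarith, by ring, by ring⟩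
  obtain ⟨m, α, hα, rfl, rfl⟩ := exists_center_radius (le_of_spectrum_subset_circularArc h₁)
  obtain ⟨n, β, hβ, rfl, rfl⟩ := exists_center_radius (le_of_spectrum_subset_circularArc h₂)
  obtain ⟨u, rfl⟩ := MulAction.surjective (Circle.exp m) u
  obtain ⟨v, rfl⟩ := MulAction.surjective (Circle.exp n) v
  rw [circle_smul_mem_unitary_iff] at hu hv
  rw [spectrum_circleExp_smul_subset_circularArc_iff] at h₁ h₂
  rw [smul_mul_smul_comm, ← Circle.exp_add, add_add_add_comm m, add_add_add_comm m α, ← neg_add,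
    spectrum_circleExp_smul_subset_circularArc_iff]
  exact spectrum_mul_subset_circularArc_neg_self hu hv hα hβ h₁ h₂

end CStarAlgebra

/-- Lemma `eigeninterval` of the paper: if every eigenvalue of the special unitary
matrix `gₖ` lies on the arc `{e^{iφ} : φ ∈ [aₖ, bₖ]}` (k = 1,2), then every eigenvalue
of `g₁g₂` lies on the arc `{e^{iφ} : φ ∈ [a₁+a₂, b₁+b₂]}`. -/
theorem stmt2 (N : ℕ) (hN : 1 ≤ N)
    (g₁ g₂ : Matrix (Fin N) (Fin N) ℂ)
    (hg₁ : g₁ ∈ unitary (Matrix (Fin N) (Fin N) ℂ)) (hd₁ : g₁.det = 1)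
    (hg₂ : g₂ ∈ unitary (Matrix (Fin N) (Fin N) ℂ)) (hd₂ : g₂.det = 1)
    (a₁ b₁ a₂ b₂ : ℝ) (hab₁ : a₁ ≤ b₁) (hab₂ : a₂ ≤ b₂)
    (h₁ : ∀ c ∈ spectrum ℂ g₁, ∃ φ : ℝ, a₁ ≤ φ ∧ φ ≤ b₁ ∧ c = Complex.exp (φ * Complex.I))
    (h₂ : ∀ c ∈ spectrum ℂ g₂, ∃ φ : ℝ, a₂ ≤ φ ∧ φ ≤ b₂ ∧ c = Complex.exp (φ * Complex.I)) :
    ∀ c ∈ spectrum ℂ (g₁ * g₂),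
      ∃ φ : ℝ, a₁ + a₂ ≤ φ ∧ φ ≤ b₁ + b₂ ∧ c = Complex.exp (φ * Complex.I) :=
  open scoped Matrix.Norms.L2Operator in stmt2_general hg₁ hg₂ h₁ h₂
end
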